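/- For every 0 < ε ≤ 1 there exists a constant K_ε > 1 such that for every 0 < δ ≤ 1 there exists a constant K̃_{ε,δ} > 1 such that for all multi-indices α, β ∈ ℕ^n, all N ∈ ℕ and all f ∈ E_N, ‖x^α ∂_x^β f‖_{L²(ℝ^n)} ≤ K̃_{ε,δ} (δ K_ε)^{|α|+|β|} Γ( (|α|+|β|)/(2−ε) + 2 ) e^{N^{1−ε/2}/δ^{2−ε}} ‖f‖_{L²(ℝ^n)}. -/

import Mathlib

open MeasureTheory
open scoped BigOperators ENNReal NNReal

noncomputable section

abbrev En (n : ℕ) := EuclideanSpace ℝ (Fin n)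

/-- One-dimensional Hermite function. -/
def hermite1 (k : ℕ) (x : ℝ) : ℝ :=
  (-1 : ℝ) ^ k * ((2 ^ k * (k.factorial : ℝ) * Real.sqrt Real.pi) ^ (-(1/2 : ℝ))) *
    Real.exp (x ^ 2 / 2) * iteratedDeriv k (fun y => Real.exp (-y ^ 2)) x

/-- Tensorized Hermite function on ℝⁿ. -/
def hermiteFun (n : ℕ) (α : Fin n → ℕ) (x : En n) : ℂ :=
  ∏ j, (hermite1 (α j) (x j) : ℂ)

/-- The span E_N of Hermite functions with |α| ≤ N. -/
def hermiteSpan (n N : ℕ) : Submodule ℂ (En n → ℂ) :=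
  Submodule.span ℂ {g | ∃ α : Fin n → ℕ, (∑ j, α j) ≤ N ∧ g = hermiteFun n α}

/-- Partial derivative in direction j. -/
def pderiv1 {n : ℕ} (j : Fin n) (f : En n → ℂ) : En n → ℂ :=
  fun x => fderiv ℝ f x (EuclideanSpace.single j (1 : ℝ))

/-- Multi-index partial derivative ∂^β. -/
def pderivMulti {n : ℕ} (β : Fin n → ℕ) (f : En n → ℂ) : En n → ℂ :=
  (List.finRange n).foldr (fun j g => (pderiv1 j)^[β j] g) f

/-- Monomial x^α. -/
def monomial (n : ℕ) (α : Fin n → ℕ) (x : En n) : ℝ := ∏ j, (x j) ^ (α j)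

/-- L² norm on ℝⁿ. -/
def L2norm (n : ℕ) (f : En n → ℂ) : ℝ := Real.sqrt (∫ x, ‖f x‖ ^ 2)

/-- Japanese bracket ⟨x⟩. -/
def jap (n : ℕ) (x : En n) : ℝ := Real.sqrt (1 + ‖x‖ ^ 2)

/-!
With the ladder operators `A_j = x_j + ∂_j` and `A_j† = x_j - ∂_j` one has
`x_j = (A_j + A_j†) / 2` and `∂_j = (A_j - A_j†) / 2`. Up to the factor `√2`, `A_j` and `A_j†` shift
the orthonormal Hermite basis with weights `√α_j` and `√(α_j + 1)`, so on `E_N` each of `x_j` and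
`∂_j` has norm at most `√(2 (N + 1))`, with values in `E_{N+1}`. Hence `x^α ∂^β` has norm at most
`(2 (N + m)) ^ (m / 2)` on `E_N`, where `m = |α| + |β|`.

Put `p = 2 - ε`. The inequality `t ^ s ≤ e ^ t Γ(s + 1)` with `t = (√(N + m) / δ) ^ p` and
`s = m / p` trades this power for the Gamma factor at the cost of `e ^ t`. As `p < 2`, subadditivity
of `x ↦ x ^ (p / 2)` and Young's inequality give `t ≤ N ^ (p / 2) / δ ^ p + m + A` with `A`
depending only on `p` and `δ`. This leads to the value `K = √2 e`.
-/

section RealInequalities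

lemma rpow_le_exp_mul_Gamma {t s : ℝ} (ht : 0 ≤ t) (hs : 0 ≤ s) :
    t ^ s ≤ Real.exp t * Real.Gamma (s + 1) := by
  have hs' : 0 < s + 1 := by linarith
  have hΓ := Real.GammaIntegral_convergent hs'
  have tail_le : ∫ x in Set.Ioi t, Real.exp (-x) * x ^ (s + 1 - 1) ≤ Real.Gamma (s + 1) := by
    rw [Real.Gamma_eq_integral hs']
    refine setIntegral_mono_set hΓ ?_ (Set.Ioi_subset_Ioi ht).eventuallyLE
    filter_upwards [ae_restrict_mem measurableSet_Ioi] with x (hx : 0 < x)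
    positivity
  have le_tail : Real.exp (-t) * t ^ s ≤ ∫ x in Set.Ioi t, Real.exp (-x) * x ^ (s + 1 - 1) := by
    rw [← integral_exp_neg_Ioi, ← integral_mul_const]
    refine setIntegral_mono_on ((integrableOn_exp_neg_Ioi t).mul_const _)
      (hΓ.mono_set (Set.Ioi_subset_Ioi ht)) measurableSet_Ioi fun x (hx : t < x) => ?_
    rw [add_sub_cancel_right]
    gcongr
  calc t ^ s = Real.exp t * (Real.exp (-t) * t ^ s) := by
        rw [← mul_assoc, ← Real.exp_add, add_neg_cancel, Real.exp_zero, one_mul]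
    _ ≤ Real.exp t * Real.Gamma (s + 1) := by gcongr; exact le_tail.trans tail_le

lemma rpow_le_exp_rpow_mul_Gamma {y p s : ℝ} (hy : 0 ≤ y) (hp : 0 < p) (hs : 0 ≤ s) :
    y ^ s ≤ Real.exp (y ^ p) * Real.Gamma (s / p + 1) := by
  have h := rpow_le_exp_mul_Gamma (Real.rpow_nonneg hy p) (div_nonneg hs hp.le)
  rwa [← Real.rpow_mul hy, mul_div_cancel₀ s hp.ne'] at h

lemma Gamma_le_Gamma_add_one {s : ℝ} (hs : 1 ≤ s) : Real.Gamma s ≤ Real.Gamma (s + 1) := by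
  rw [Real.Gamma_add_one (by linarith)]
  exact le_mul_of_one_le_left (Real.Gamma_pos_of_pos (by linarith)).le hs

lemma rpow_mul_le_add_rpow {x D q : ℝ} (hx : 0 ≤ x) (hD : 0 ≤ D) (hq : 0 ≤ q) (hq1 : q < 1) :
    x ^ q * D ≤ x + D ^ (1 - q)⁻¹ := by
  have hq' : 0 < 1 - q := by linarith
  calc x ^ q * D = x ^ q * (D ^ (1 - q)⁻¹) ^ (1 - q) := by
        rw [← Real.rpow_mul hD, inv_mul_cancel₀ hq'.ne', Real.rpow_one]
    _ ≤ q * x + (1 - q) * D ^ (1 - q)⁻¹ :=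
        Real.geom_mean_le_arith_mean2_weighted hq hq'.le hx (Real.rpow_nonneg hD _) (by ring)
    _ ≤ x + D ^ (1 - q)⁻¹ := add_le_add (mul_le_of_le_one_left hx hq1.le)
        (mul_le_of_le_one_left (Real.rpow_nonneg hD _) (by linarith))

lemma sqrt_add_div_rpow_le {x y δ p : ℝ} (hx : 0 ≤ x) (hy : 0 ≤ y) (hδ : 0 < δ) (hp : 0 ≤ p)
    (hp2 : p < 2) :
    (√(x + y) / δ) ^ p ≤ x ^ (p / 2) / δ ^ p + (y + (δ ^ p)⁻¹ ^ (1 - p / 2)⁻¹) := by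
  have hq1 : p / 2 < 1 := by linarith
  calc (√(x + y) / δ) ^ p = (x + y) ^ (p / 2) / δ ^ p := by
        rw [Real.div_rpow (Real.sqrt_nonneg _) hδ.le, Real.sqrt_eq_rpow,
          ← Real.rpow_mul (add_nonneg hx hy), one_div_mul_eq_div]
    _ ≤ (x ^ (p / 2) + y ^ (p / 2)) / δ ^ p := by
        gcongr
        exact Real.rpow_add_le_add_rpow hx hy (by positivity) hq1.le
    _ = x ^ (p / 2) / δ ^ p + y ^ (p / 2) * (δ ^ p)⁻¹ := by rw [add_div, ← div_eq_mul_inv]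
    _ ≤ _ := by
        gcongr
        exact rpow_mul_le_add_rpow hy (by positivity) (by positivity) hq1

lemma exists_sqrt_pow_le_exp_mul_Gamma {p δ : ℝ} (hp : 0 < p) (hp2 : p < 2) (hδ : 0 < δ) :
    ∃ C : ℝ, 1 < C ∧ ∀ N m : ℕ, √(2 * (N + m : ℕ)) ^ m ≤
      C * (δ * (√2 * Real.exp 1)) ^ m * Real.Gamma (m / p + 2) *
        Real.exp ((N : ℝ) ^ (p / 2) / δ ^ p) := by
  set A : ℝ := (δ ^ p)⁻¹ ^ (1 - p / 2)⁻¹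
  have hA : 0 < A := by positivity
  refine ⟨Real.exp A, Real.one_lt_exp_iff.2 hA, fun N m => ?_⟩
  set y : ℝ := √(N + m : ℝ) / δ with hy
  have hΓ : Real.Gamma (m / p + 1) ≤ Real.Gamma (m / p + 2) := by
    rw [← one_add_one_eq_two, ← add_assoc]
    exact Gamma_le_Gamma_add_one (le_add_of_nonneg_left (by positivity))
  have hy_pow : y ^ m ≤ Real.exp (N ^ (p / 2) / δ ^ p + (m + A)) * Real.Gamma (m / p + 2) := by
    rw [← Real.rpow_natCast]
    refine (rpow_le_exp_rpow_mul_Gamma (by positivity) hp m.cast_nonneg).trans ?_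
    gcongr
    exact sqrt_add_div_rpow_le N.cast_nonneg m.cast_nonneg hδ hp.le hp2
  calc √(2 * (N + m : ℕ)) ^ m = √2 ^ m * δ ^ m * y ^ m := by
        rw [← mul_pow, ← mul_pow, hy, Real.sqrt_mul zero_le_two, Nat.cast_add]
        field_simp
    _ ≤ √2 ^ m * δ ^ m *
          (Real.exp (N ^ (p / 2) / δ ^ p + (m + A)) * Real.Gamma (m / p + 2)) := by gcongr
    _ = _ := by
        rw [Real.exp_add, Real.exp_add, ← mul_one (m : ℝ), Real.exp_nat_mul, mul_one]
        ring

end RealInequalities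

section OneDimensional

lemma derivative_hermite_succ (k : ℕ) :
    Polynomial.derivative (Polynomial.hermite (k + 1)) =
      ((k + 1 : ℕ) : Polynomial ℤ) * Polynomial.hermite k := by
  induction k with
  | zero => simp
  | succ k ih =>
    rw [Polynomial.hermite_succ (k + 1), ih]
    simp only [Polynomial.derivative_sub, Polynomial.derivative_mul, Polynomial.derivative_X,
      Polynomial.derivative_natCast, ih]
    push_cast
    linear_combination -((k : Polynomial ℤ) + 1) * Polynomial.hermite_succ k

lemma derivative_hermite (k : ℕ) :
    Polynomial.derivative (Polynomial.hermite k) =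
      (k : Polynomial ℤ) * Polynomial.hermite (k - 1) := by
  cases k with
  | zero => simp
  | succ k => exact derivative_hermite_succ k

/-- The constant `(k! √π)^(-1/2)` normalizing `He_k(√2 x) e^{-x²/2}` in `L²(ℝ)`, where `He_k` is the
probabilists' Hermite polynomial `Polynomial.hermite k`. -/
def hermiteConst (k : ℕ) : ℝ := (√(k.factorial * √Real.pi))⁻¹

lemma hermiteConst_eq_sqrt_mul_succ (k : ℕ) : hermiteConst k = √(k + 1) * hermiteConst (k + 1) := by
  rw [hermiteConst, hermiteConst, Nat.factorial_succ, Nat.cast_mul, mul_assoc, Nat.cast_succ,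
    Real.sqrt_mul (x := (k : ℝ) + 1) (by positivity), mul_inv,
    mul_inv_cancel_left₀ (by positivity)]

lemma natCast_mul_hermiteConst (k : ℕ) : k * hermiteConst k = √k * hermiteConst (k - 1) := by
  cases k with
  | zero => simp
  | succ k =>
    rw [Nat.add_sub_cancel, hermiteConst_eq_sqrt_mul_succ k, Nat.cast_succ, ← mul_assoc,
      Real.mul_self_sqrt (by positivity)]

lemma iteratedDeriv_exp_neg_sq (k : ℕ) (x : ℝ) :
    iteratedDeriv k (fun y => Real.exp (-y ^ 2)) x =
      (-1) ^ k * √2 ^ k * Polynomial.aeval (√2 * x) (Polynomial.hermite k) *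
        Real.exp (-x ^ 2) := by
  have hsq (y : ℝ) : (√2 * y) ^ 2 / 2 = y ^ 2 := by
    rw [mul_pow, Real.sq_sqrt zero_le_two, mul_div_cancel_left₀ _ two_ne_zero]
  have hscale : (fun y : ℝ => Real.exp (-y ^ 2)) =
      fun y => (fun t => Real.exp (-(t ^ 2 / 2))) (√2 * y) := by
    simp only [hsq]
  rw [hscale, iteratedDeriv_comp_const_mul (f := fun t => Real.exp (-(t ^ 2 / 2))) (by fun_prop)]
  simp only [iteratedDeriv_eq_iterate, Polynomial.deriv_gaussian_eq_hermite_mul_gaussian, hsq]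
  ring

lemma hermite1_eq_aeval_hermite (k : ℕ) (x : ℝ) :
    hermite1 k x = hermiteConst k * Polynomial.aeval (√2 * x) (Polynomial.hermite k) *
      Real.exp (-x ^ 2 / 2) := by
  have hexp : Real.exp (x ^ 2 / 2) * Real.exp (-x ^ 2) = Real.exp (-x ^ 2 / 2) := by
    rw [← Real.exp_add]; ring_nf
  have hconst : (2 ^ k * (k.factorial : ℝ) * √Real.pi) ^ (-(1 / 2 : ℝ)) * √2 ^ k =
      hermiteConst k := by
    have hpow : √2 ^ k = √(2 ^ k) := by
      rw [Real.sqrt_eq_rpow, Real.sqrt_eq_rpow, Real.rpow_pow_comm zero_le_two]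
    rw [Real.rpow_neg (by positivity), ← Real.sqrt_eq_rpow, mul_assoc,
      Real.sqrt_mul (by positivity), hpow, hermiteConst]
    field_simp
  have hsign : (-1 : ℝ) ^ k * (-1) ^ k = 1 := by rw [← mul_pow]; norm_num
  rw [hermite1, iteratedDeriv_exp_neg_sq, ← hconst, ← hexp]
  linear_combination (2 ^ k * (k.factorial : ℝ) * √Real.pi) ^ (-(1 / 2 : ℝ)) * √2 ^ k *
    Polynomial.aeval (√2 * x) (Polynomial.hermite k) * Real.exp (x ^ 2 / 2) *
    Real.exp (-x ^ 2) * hsign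

lemma mul_hermite1 (k : ℕ) (x : ℝ) :
    x * hermite1 k x =
      (√2)⁻¹ * (√(k + 1) * hermite1 (k + 1) x + √k * hermite1 (k - 1) x) := by
  have hrec : √2 * x * Polynomial.aeval (√2 * x) (Polynomial.hermite k) =
      Polynomial.aeval (√2 * x) (Polynomial.hermite (k + 1)) +
        k * Polynomial.aeval (√2 * x) (Polynomial.hermite (k - 1)) := by
    rw [Polynomial.hermite_succ, derivative_hermite]
    simp
  rw [eq_inv_mul_iff_mul_eq₀ (by positivity)]
  simp only [hermite1_eq_aeval_hermite]
  linear_combination Real.exp (-x ^ 2 / 2) * (hermiteConst k * hrec +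
    Polynomial.aeval (√2 * x) (Polynomial.hermite (k + 1)) * hermiteConst_eq_sqrt_mul_succ k +
    Polynomial.aeval (√2 * x) (Polynomial.hermite (k - 1)) * natCast_mul_hermiteConst k)

lemma hasDerivAt_hermite1' (k : ℕ) (x : ℝ) :
    HasDerivAt (hermite1 k) (√2 * √k * hermite1 (k - 1) x - x * hermite1 k x) x := by
  have hpoly : HasDerivAt (fun y => Polynomial.aeval (√2 * y) (Polynomial.hermite k))
      (k * Polynomial.aeval (√2 * x) (Polynomial.hermite (k - 1)) * √2) x := by
    have h := ((Polynomial.hermite k).hasDerivAt_aeval (√2 * x)).comp x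
      ((hasDerivAt_id x).const_mul √2)
    simpa [derivative_hermite] using! h
  have hexp : HasDerivAt (fun y : ℝ => Real.exp (-y ^ 2 / 2)) (Real.exp (-x ^ 2 / 2) * -x) x := by
    have h := ((hasDerivAt_pow 2 x).neg.div_const 2).exp
    exact h.congr_deriv (by simp [neg_div])
  have h := (hpoly.const_mul (hermiteConst k)).mul hexp
  rw [funext (hermite1_eq_aeval_hermite k)]
  refine h.congr_deriv ?_
  simp only [hermite1_eq_aeval_hermite]
  linear_combination √2 * Polynomial.aeval (√2 * x) (Polynomial.hermite (k - 1)) *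
    Real.exp (-x ^ 2 / 2) * natCast_mul_hermiteConst k

lemma hasDerivAt_hermite1 (k : ℕ) (x : ℝ) :
    HasDerivAt (hermite1 k)
      ((√2)⁻¹ * (√k * hermite1 (k - 1) x - √(k + 1) * hermite1 (k + 1) x)) x := by
  refine (hasDerivAt_hermite1' k x).congr_deriv ?_
  have h2 : 2 * (√2)⁻¹ = √2 := Real.div_sqrt
  rw [mul_hermite1]
  linear_combination √k * hermite1 (k - 1) x * -h2

lemma differentiable_hermite1 (k : ℕ) : Differentiable ℝ (hermite1 k) :=
  fun x => (hasDerivAt_hermite1 k x).differentiableAt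

lemma integrable_eval_mul_exp_neg_mul_sq {b : ℝ} (hb : 0 < b) (P : Polynomial ℝ) :
    Integrable fun x => P.eval x * Real.exp (-b * x ^ 2) := by
  induction P using Polynomial.induction_on' with
  | add P Q hP hQ => simpa only [Polynomial.eval_add, add_mul] using! hP.add hQ
  | monomial k a =>
    have h := integrable_rpow_mul_exp_neg_mul_sq hb (s := k)
      (neg_one_lt_zero.trans_le k.cast_nonneg)
    simpa only [Polynomial.eval_monomial, Real.rpow_natCast, mul_assoc] using! h.const_mul a

lemma hermite1_mul_hermite1 (k l : ℕ) (x : ℝ) :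
    hermite1 k x * hermite1 l x = hermiteConst k * hermiteConst l *
      (Polynomial.aeval (√2 * x) (Polynomial.hermite k * Polynomial.hermite l) *
        Real.exp (-1 * x ^ 2)) := by
  have hexp : Real.exp (-1 * x ^ 2) = Real.exp (-x ^ 2 / 2) * Real.exp (-x ^ 2 / 2) := by
    rw [← Real.exp_add]; ring_nf
  rw [hermite1_eq_aeval_hermite, hermite1_eq_aeval_hermite, hexp, map_mul]
  ring

lemma integrable_hermite1_mul_hermite1 (k l : ℕ) :
    Integrable fun x => hermite1 k x * hermite1 l x := by
  let P : Polynomial ℝ := ((Polynomial.hermite k * Polynomial.hermite l).map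
    (algebraMap ℤ ℝ)).comp (Polynomial.C √2 * Polynomial.X)
  have hP (x : ℝ) : P.eval x =
      Polynomial.aeval (√2 * x) (Polynomial.hermite k * Polynomial.hermite l) := by
    simp only [P, Polynomial.eval_comp, Polynomial.eval_map_algebraMap, Polynomial.eval_mul,
      Polynomial.eval_C, Polynomial.eval_X]
  simp_rw [hermite1_mul_hermite1, ← hP]
  exact (integrable_eval_mul_exp_neg_mul_sq one_pos P).const_mul _

/-- With `A = x + d/dx` and its formal adjoint `A† = x - d/dx` this is
`⟨A† φ_k, φ_l⟩ = ⟨φ_k, A φ_l⟩`. -/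
lemma sqrt_succ_mul_integral_hermite1 (k l : ℕ) :
    √(k + 1) * ∫ x, hermite1 (k + 1) x * hermite1 l x =
      √l * ∫ x, hermite1 k x * hermite1 (l - 1) x := by
  have hderiv (x : ℝ) : HasDerivAt (fun y => hermite1 k y * hermite1 l y)
      (√2 * (√l * (hermite1 k x * hermite1 (l - 1) x) -
        √(k + 1) * (hermite1 (k + 1) x * hermite1 l x))) x := by
    refine ((hasDerivAt_hermite1 k x).mul (hasDerivAt_hermite1' l x)).congr_deriv ?_
    have hx := mul_hermite1 k x
    have h2 : 2 * (√2)⁻¹ = √2 := Real.div_sqrt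
    linear_combination -hermite1 l x * hx -
      √(k + 1) * hermite1 (k + 1) x * hermite1 l x * h2
  have hdown := (integrable_hermite1_mul_hermite1 k (l - 1)).const_mul √l
  have hup := (integrable_hermite1_mul_hermite1 (k + 1) l).const_mul √(k + 1)
  have h := integral_eq_zero_of_hasDerivAt_of_integrable hderiv ((hdown.sub hup).const_mul √2)
    (integrable_hermite1_mul_hermite1 k l)
  rw [integral_const_mul, integral_sub hdown hup, integral_const_mul, integral_const_mul,
    mul_eq_zero_iff_left (by positivity), sub_eq_zero] at h
  exact h.symm

lemma integral_hermite1_zero_mul_self : ∫ x, hermite1 0 x * hermite1 0 x = 1 := by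
  have hconst : hermiteConst 0 * hermiteConst 0 = (√Real.pi)⁻¹ := by
    rw [hermiteConst, ← mul_inv, Real.mul_self_sqrt (by positivity), Nat.factorial_zero,
      Nat.cast_one, one_mul]
  simp_rw [hermite1_mul_hermite1, Polynomial.hermite_zero, map_one, mul_one, map_one, one_mul,
    hconst]
  rw [integral_const_mul, integral_gaussian, div_one, inv_mul_cancel₀ (by positivity)]

lemma integral_hermite1_mul_hermite1 (k l : ℕ) :
    ∫ x, hermite1 k x * hermite1 l x = if k = l then 1 else 0 := by
  have hzero (k : ℕ) : ∫ x, hermite1 (k + 1) x * hermite1 0 x = 0 := by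
    have h := sqrt_succ_mul_integral_hermite1 k 0
    rw [Nat.cast_zero, Real.sqrt_zero, zero_mul] at h
    exact (mul_eq_zero_iff_left (by positivity)).1 h
  induction k generalizing l with
  | zero =>
    cases l with
    | zero => exact integral_hermite1_zero_mul_self
    | succ l => simpa only [mul_comm, l.succ_ne_zero.symm, if_false] using hzero l
  | succ k ih =>
    cases l with
    | zero => exact hzero k
    | succ l =>
      have h := sqrt_succ_mul_integral_hermite1 k (l + 1)
      rw [Nat.add_sub_cancel, ih, Nat.cast_succ] at h
      have hk : √((k : ℝ) + 1) ≠ 0 := by positivity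
      rcases eq_or_ne k l with rfl | hkl
      · simpa [hk] using h
      · simpa [hk, hkl] using h

end OneDimensional

section Orthonormal

variable {𝕜 E ι κ : Type*} [RCLike 𝕜] [SeminormedAddCommGroup E] [InnerProductSpace 𝕜 E]
  {v : ι → E}

lemma norm_sq_sum_smul_of_orthonormal (hv : Orthonormal 𝕜 v) (s : Finset κ) (c : κ → 𝕜) {g : κ → ι}
    (hg : Set.InjOn g {i | i ∈ s ∧ c i ≠ 0}) :
    ‖∑ i ∈ s, c i • v (g i)‖ ^ 2 = ∑ i ∈ s, ‖c i‖ ^ 2 := by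
  classical
  let t := s.filter (c · ≠ 0)
  have hvt : Orthonormal 𝕜 fun i : t => v (g i) :=
    hv.comp _ fun i k hik => Subtype.ext <|
      hg (Finset.mem_filter.1 i.2) (Finset.mem_filter.1 k.2) hik
  calc ‖∑ i ∈ s, c i • v (g i)‖ ^ 2 = ‖∑ i : t, c i • v (g i)‖ ^ 2 := by
        rw [Finset.sum_coe_sort t fun i => c i • v (g i), Finset.sum_filter_of_ne]
        exact fun i _ hi => left_ne_zero_of_smul hi
    _ = ∑ i : t, ‖c i‖ ^ 2 := hvt.orthogonalFamily.norm_sum (fun i => c i) Finset.univ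
    _ = ∑ i ∈ s, ‖c i‖ ^ 2 := by
        rw [Finset.sum_coe_sort t fun i => ‖c i‖ ^ 2, Finset.sum_filter_of_ne]
        exact fun i _ hi => by simpa using hi

lemma norm_sum_mul_smul_le_of_orthonormal (hv : Orthonormal 𝕜 v) {s : Finset ι} (c : ι → 𝕜)
    {w : ι → 𝕜} {B : ℝ} (hB : 0 ≤ B) (hw : ∀ i ∈ s, ‖w i‖ ≤ B) {g : ι → ι}
    (hg : Set.InjOn g {i | w i ≠ 0}) :
    ‖∑ i ∈ s, (w i * c i) • v (g i)‖ ≤ B * ‖∑ i ∈ s, c i • v i‖ := by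
  refine le_of_sq_le_sq ?_ (by positivity)
  rw [mul_pow, norm_sq_sum_smul_of_orthonormal hv s (fun i => w i * c i)
      (hg.mono fun i hi => left_ne_zero_of_mul hi.2),
    norm_sq_sum_smul_of_orthonormal hv s c (g := fun i => i) (Set.injOn_id _), Finset.mul_sum]
  refine Finset.sum_le_sum fun i hi => ?_
  rw [norm_mul, mul_pow]
  gcongr
  exact hw i hi

end Orthonormal

section L2norm

variable {n : ℕ}

lemma L2norm_eq_lpNorm {f : En n → ℂ} (hf : AEStronglyMeasurable f) :
    L2norm n f = lpNorm f 2 volume := by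
  rw [lpNorm_eq_integral_norm_rpow_toReal two_ne_zero ENNReal.ofNat_ne_top hf, L2norm,
    Real.sqrt_eq_rpow]
  norm_num

lemma norm_toLp_eq_L2norm {f : En n → ℂ} (hf : MemLp f 2) : ‖hf.toLp f‖ = L2norm n f := by
  rw [Lp.norm_toLp, toReal_eLpNorm hf.1, L2norm_eq_lpNorm hf.1]

lemma L2norm_neg (f : En n → ℂ) : L2norm n (-f) = L2norm n f := by
  simp only [L2norm, Pi.neg_apply, norm_neg]

lemma L2norm_inv_sqrt_two_smul_add_le {f g : En n → ℂ} {B : ℝ} (hf : MemLp f 2) (hg : MemLp g 2)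
    (hfB : L2norm n f ≤ B) (hgB : L2norm n g ≤ B) :
    L2norm n (((√2)⁻¹ : ℂ) • (f + g)) ≤ √2 * B := by
  have h2 : (√2)⁻¹ * 2 = √2 := (inv_mul_eq_div _ _).trans Real.div_sqrt
  have hnorm : ‖((√2)⁻¹ : ℂ)‖ = (√2)⁻¹ := by simp
  rw [L2norm_eq_lpNorm hf.1] at hfB
  rw [L2norm_eq_lpNorm hg.1] at hgB
  rw [L2norm_eq_lpNorm ((hf.add hg).const_smul _).1, lpNorm_const_smul, coe_nnnorm, hnorm]
  calc (√2)⁻¹ * lpNorm (f + g) 2 volume ≤ (√2)⁻¹ * (B + B) := by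
        gcongr
        exact (lpNorm_add_le hf one_le_two).trans (add_le_add hfB hgB)
    _ = √2 * B := by rw [← two_mul, ← mul_assoc, h2]

end L2norm

section HermiteFunctions

variable {n : ℕ}

lemma hermiteFun_eq_ofReal (α : Fin n → ℕ) (x : En n) :
    hermiteFun n α x = (∏ j, hermite1 (α j) (x j) : ℝ) := by
  rw [hermiteFun, Complex.ofReal_prod]

lemma differentiable_hermiteFun (α : Fin n → ℕ) : Differentiable ℝ (hermiteFun n α) := by
  have hcoord (j : Fin n) : Differentiable ℝ fun x : En n => (hermite1 (α j) (x j) : ℂ) :=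
    Complex.ofRealCLM.differentiable.comp ((differentiable_hermite1 (α j)).comp (by fun_prop))
  exact fun x => (HasFDerivAt.finsetProd (g := fun j (x : En n) => (hermite1 (α j) (x j) : ℂ))
    fun j _ => (hcoord j x).hasFDerivAt).differentiableAt

lemma memLp_hermiteFun (α : Fin n → ℕ) : MemLp (hermiteFun n α) 2 := by
  refine (memLp_two_iff_integrable_sq_norm
    (differentiable_hermiteFun α).continuous.aestronglyMeasurable).2 ?_
  have h : Integrable fun y : Fin n → ℝ => ∏ j, (hermite1 (α j) (y j) * hermite1 (α j) (y j)) :=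
    Integrable.fintype_prod fun j => integrable_hermite1_mul_hermite1 (α j) (α j)
  refine ((PiLp.volume_preserving_ofLp (Fin n)).integrable_comp_of_integrable h).congr
    (.of_forall fun x => ?_)
  dsimp only [Function.comp_apply]
  rw [Finset.prod_mul_distrib, hermiteFun_eq_ofReal, Complex.norm_real, Real.norm_eq_abs, sq_abs,
    sq]

lemma integral_inner_hermiteFun (α β : Fin n → ℕ) :
    ∫ x, inner ℂ (hermiteFun n α x) (hermiteFun n β x) = if α = β then 1 else 0 := by
  have hinner (x : En n) : inner ℂ (hermiteFun n α x) (hermiteFun n β x) =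
      (∏ j, (hermite1 (α j) (x j) * hermite1 (β j) (x j)) : ℝ) := by
    rw [hermiteFun_eq_ofReal, hermiteFun_eq_ofReal, RCLike.inner_apply, Complex.conj_ofReal,
      Finset.prod_mul_distrib, Complex.ofReal_mul, mul_comm]
  have hprod : ∫ x : En n, ∏ j, (hermite1 (α j) (x j) * hermite1 (β j) (x j)) =
      ∏ j, ∫ y, hermite1 (α j) y * hermite1 (β j) y :=
    ((EuclideanSpace.volume_preserving_symm_measurableEquiv_toLp (Fin n)).integral_comp'
      fun y : Fin n → ℝ => ∏ j, (hermite1 (α j) (y j) * hermite1 (β j) (y j))).trans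
      (integral_fintype_prod_volume_eq_prod fun j y => hermite1 (α j) y * hermite1 (β j) y)
  simp_rw [hinner]
  rw [integral_complex_ofReal, hprod]
  simp only [integral_hermite1_mul_hermite1, Fintype.prod_ite_zero, Finset.prod_const_one,
    ← funext_iff]
  split_ifs <;> simp

/-- The Hermite function `Φ_α` as an element of the Hilbert space `L²(ℝⁿ)`, in which the family is
orthonormal. -/
def hermiteLp (α : Fin n → ℕ) : Lp ℂ 2 (volume : Measure (En n)) :=
  (memLp_hermiteFun α).toLp (hermiteFun n α)

lemma orthonormal_hermiteLp : Orthonormal ℂ (hermiteLp (n := n)) := by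
  classical
  refine orthonormal_iff_ite.2 fun α β => ?_
  rw [L2.inner_def, ← integral_inner_hermiteFun α β]
  refine integral_congr_ae ?_
  filter_upwards [(memLp_hermiteFun α).coeFn_toLp, (memLp_hermiteFun β).coeFn_toLp] with x hα hβ
  rw [hermiteLp, hermiteLp, hα, hβ]

lemma hermiteFun_mem_hermiteSpan {α : Fin n → ℕ} {N : ℕ} (hα : ∑ j, α j ≤ N) :
    hermiteFun n α ∈ hermiteSpan n N :=
  Submodule.subset_span ⟨α, hα, rfl⟩

lemma exists_eq_sum_of_mem_hermiteSpan {N : ℕ} {f : En n → ℂ} (hf : f ∈ hermiteSpan n N) :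
    ∃ (s : Finset (Fin n → ℕ)) (c : (Fin n → ℕ) → ℂ), (∀ α ∈ s, ∑ j, α j ≤ N) ∧
      f = ∑ α ∈ s, c α • hermiteFun n α := by
  have himage : {g | ∃ α : Fin n → ℕ, ∑ j, α j ≤ N ∧ g = hermiteFun n α} =
      hermiteFun n '' {α | ∑ j, α j ≤ N} := by
    ext g
    simp only [Set.mem_ofPred_eq, Set.mem_image, eq_comm]
  rw [hermiteSpan, himage, Finsupp.mem_span_image_iff_linearCombination] at hf
  obtain ⟨c, hc, rfl⟩ := hf
  exact ⟨c.support, c, fun α hα => hc hα, Finsupp.linearCombination_apply ℂ c⟩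

lemma memLp_of_mem_hermiteSpan {N : ℕ} {f : En n → ℂ} (hf : f ∈ hermiteSpan n N) : MemLp f 2 := by
  obtain ⟨s, c, -, rfl⟩ := exists_eq_sum_of_mem_hermiteSpan hf
  exact memLp_finsetSum' s fun α _ => (memLp_hermiteFun α).const_smul (c α)

lemma L2norm_sum_smul_hermiteFun {κ : Type*} (s : Finset κ) (c : κ → ℂ) (g : κ → Fin n → ℕ) :
    L2norm n (∑ i ∈ s, c i • hermiteFun n (g i)) = ‖∑ i ∈ s, c i • hermiteLp (g i)‖ := by
  classical
  have hmem (s : Finset κ) : MemLp (∑ i ∈ s, c i • hermiteFun n (g i)) 2 :=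
    memLp_finsetSum' s fun i _ => (memLp_hermiteFun (g i)).const_smul (c i)
  have htoLp : (hmem s).toLp = ∑ i ∈ s, c i • hermiteLp (g i) := by
    induction s using Finset.induction_on with
    | empty => exact MemLp.toLp_zero (hmem ∅)
    | insert i s hi ih =>
      simp_rw [Finset.sum_insert hi, ← ih]
      exact MemLp.toLp_add ((memLp_hermiteFun (g i)).const_smul (c i)) (hmem s)
  rw [← norm_toLp_eq_L2norm (hmem s), htoLp]

lemma L2norm_sum_weighted_shift_le {s : Finset (Fin n → ℕ)} (c : (Fin n → ℕ) → ℂ)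
    {w : (Fin n → ℕ) → ℂ} {B : ℝ} (hB : 0 ≤ B) (hw : ∀ α ∈ s, ‖w α‖ ≤ B)
    {g : (Fin n → ℕ) → Fin n → ℕ} (hg : Set.InjOn g {α | w α ≠ 0}) :
    L2norm n (∑ α ∈ s, (w α * c α) • hermiteFun n (g α)) ≤
      B * L2norm n (∑ α ∈ s, c α • hermiteFun n α) := by
  rw [L2norm_sum_smul_hermiteFun, L2norm_sum_smul_hermiteFun s c fun α => α]
  exact norm_sum_mul_smul_le_of_orthonormal orthonormal_hermiteLp c hB hw hg

end HermiteFunctions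

section Ladder

variable {n N : ℕ} {f : En n → ℂ}

lemma hermiteFun_eq_mul_prod_erase (α : Fin n → ℕ) (x : En n) (j : Fin n) {β : Fin n → ℕ}
    {y : En n} (hβ : ∀ i ≠ j, β i = α i) (hy : ∀ i ≠ j, y i = x i) :
    hermiteFun n β y =
      hermite1 (β j) (y j) * ∏ i ∈ Finset.univ.erase j, (hermite1 (α i) (x i) : ℂ) := by
  rw [hermiteFun, ← Finset.mul_prod_erase _ _ (Finset.mem_univ j)]
  congr 1
  refine Finset.prod_congr rfl fun i hi => ?_
  rw [hβ i (Finset.ne_of_mem_erase hi), hy i (Finset.ne_of_mem_erase hi)]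

lemma hermiteFun_add_single (α : Fin n → ℕ) (j : Fin n) (x : En n) :
    hermiteFun n (α + Pi.single j 1) x =
      hermite1 (α j + 1) (x j) * ∏ i ∈ Finset.univ.erase j, (hermite1 (α i) (x i) : ℂ) := by
  rw [hermiteFun_eq_mul_prod_erase α x j (fun i hi => by simp [hi]) fun _ _ => rfl]
  simp

lemma hermiteFun_sub_single (α : Fin n → ℕ) (j : Fin n) (x : En n) :
    hermiteFun n (α - Pi.single j 1) x =
      hermite1 (α j - 1) (x j) * ∏ i ∈ Finset.univ.erase j, (hermite1 (α i) (x i) : ℂ) := by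
  rw [hermiteFun_eq_mul_prod_erase α x j (fun i hi => by simp [hi]) fun _ _ => rfl]
  simp

lemma coord_mul_hermiteFun (α : Fin n → ℕ) (j : Fin n) (x : En n) :
    (x j : ℂ) * hermiteFun n α x = ((√2)⁻¹ : ℂ) *
      (√(α j + 1) * hermiteFun n (α + Pi.single j 1) x +
        √(α j) * hermiteFun n (α - Pi.single j 1) x) := by
  have h := congrArg Complex.ofReal (mul_hermite1 (α j) (x j))
  push_cast at h
  rw [hermiteFun_eq_mul_prod_erase α x j (fun _ _ => rfl) fun _ _ => rfl, hermiteFun_add_single,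
    hermiteFun_sub_single]
  linear_combination (∏ i ∈ Finset.univ.erase j, (hermite1 (α i) (x i) : ℂ)) * h

lemma pderiv1_hermiteFun (α : Fin n → ℕ) (j : Fin n) (x : En n) :
    pderiv1 j (hermiteFun n α) x = ((√2)⁻¹ : ℂ) *
      (√(α j) * hermiteFun n (α - Pi.single j 1) x -
        √(α j + 1) * hermiteFun n (α + Pi.single j 1) x) := by
  have hline (t : ℝ) : hermiteFun n α (x + t • EuclideanSpace.single j 1) =
      hermite1 (α j) (x j + t) * ∏ i ∈ Finset.univ.erase j, (hermite1 (α i) (x i) : ℂ) := by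
    rw [hermiteFun_eq_mul_prod_erase α x j (fun _ _ => rfl) fun i hi => by simp [hi]]
    simp
  have hderiv := hasDerivAt_hermite1 (α j) (x j + 0)
  rw [pderiv1, ← (differentiable_hermiteFun α x).lineDeriv_eq_fderiv, lineDeriv, funext hline,
    ((hderiv.comp_const_add (x j) 0).ofReal_comp.mul_const _).deriv, hermiteFun_add_single,
    hermiteFun_sub_single, add_zero]
  push_cast
  ring

lemma pderiv1_sum_smul_hermiteFun (s : Finset (Fin n → ℕ)) (c : (Fin n → ℕ) → ℂ) (j : Fin n) :
    pderiv1 j (∑ α ∈ s, c α • hermiteFun n α) = ∑ α ∈ s, c α • pderiv1 j (hermiteFun n α) := by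
  ext x
  rw [pderiv1, fderiv_sum fun α _ => (differentiable_hermiteFun α x).const_smul (c α),
    sum_apply, Finset.sum_apply]
  refine Finset.sum_congr rfl fun α _ => ?_
  rw [fderiv_const_smul (differentiable_hermiteFun α x)]
  rfl

lemma sum_add_single (α : Fin n → ℕ) (j : Fin n) :
    ∑ i, (α + Pi.single j 1 : Fin n → ℕ) i = ∑ i, α i + 1 := by
  simp [Finset.sum_add_distrib]

lemma sum_sub_single_le (α : Fin n → ℕ) (j : Fin n) :
    ∑ i, (α - Pi.single j 1 : Fin n → ℕ) i ≤ ∑ i, α i :=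
  Finset.sum_le_sum fun _ _ => tsub_le_self

lemma injOn_sub_single (j : Fin n) :
    Set.InjOn (fun α : Fin n → ℕ => α - Pi.single j 1) {α | α j ≠ 0} := by
  have hle {α : Fin n → ℕ} (hα : α j ≠ 0) : Pi.single j 1 ≤ α :=
    update_le_iff.2 ⟨Nat.one_le_iff_ne_zero.2 hα, fun i _ => zero_le⟩
  exact fun α hα β hβ h => (tsub_left_inj (hle hα) (hle hβ)).1 h

lemma apply_le_of_sum_le {α : Fin n → ℕ} (hα : ∑ i, α i ≤ N) (j : Fin n) : α j ≤ N :=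
  (Finset.single_le_sum (fun _ _ => zero_le) (Finset.mem_univ j)).trans hα

lemma L2norm_sum_raise_le {s : Finset (Fin n → ℕ)} (hs : ∀ α ∈ s, ∑ i, α i ≤ N)
    (c : (Fin n → ℕ) → ℂ) (j : Fin n) :
    L2norm n (∑ α ∈ s, (√(α j + 1) * c α : ℂ) • hermiteFun n (α + Pi.single j 1)) ≤
      √(N + 1) * L2norm n (∑ α ∈ s, c α • hermiteFun n α) := by
  refine L2norm_sum_weighted_shift_le c (by positivity) (fun α hα => ?_)
    (add_left_injective _).injOn
  rw [Complex.norm_of_nonneg (Real.sqrt_nonneg _)]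
  gcongr
  exact apply_le_of_sum_le (hs α hα) j

lemma L2norm_sum_lower_le {s : Finset (Fin n → ℕ)} (hs : ∀ α ∈ s, ∑ i, α i ≤ N)
    (c : (Fin n → ℕ) → ℂ) (j : Fin n) :
    L2norm n (∑ α ∈ s, (√(α j) * c α : ℂ) • hermiteFun n (α - Pi.single j 1)) ≤
      √N * L2norm n (∑ α ∈ s, c α • hermiteFun n α) := by
  have hsupport : {α : Fin n → ℕ | (√(α j) : ℂ) ≠ 0} ⊆ {α | α j ≠ 0} := by
    intro α hα h
    simp [h] at hα
  refine L2norm_sum_weighted_shift_le c (by positivity) (fun α hα => ?_)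
    ((injOn_sub_single j).mono hsupport)
  rw [Complex.norm_of_nonneg (Real.sqrt_nonneg _)]
  gcongr
  exact apply_le_of_sum_le (hs α hα) j

lemma exists_ladder_decomposition (j : Fin n) (hf : f ∈ hermiteSpan n N) :
    ∃ u ∈ hermiteSpan n (N + 1), ∃ d ∈ hermiteSpan n (N + 1),
      L2norm n u ≤ √(N + 1) * L2norm n f ∧ L2norm n d ≤ √(N + 1) * L2norm n f ∧
      (fun x => (x j : ℂ) * f x) = ((√2)⁻¹ : ℂ) • (u + d) ∧
      pderiv1 j f = ((√2)⁻¹ : ℂ) • (d + -u) := by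
  obtain ⟨s, c, hs, rfl⟩ := exists_eq_sum_of_mem_hermiteSpan hf
  refine ⟨∑ α ∈ s, (√(α j + 1) * c α : ℂ) • hermiteFun n (α + Pi.single j 1),
    Submodule.sum_mem _ fun α hα => Submodule.smul_mem _ _ (hermiteFun_mem_hermiteSpan ?_),
    ∑ α ∈ s, (√(α j) * c α : ℂ) • hermiteFun n (α - Pi.single j 1),
    Submodule.sum_mem _ fun α hα => Submodule.smul_mem _ _ (hermiteFun_mem_hermiteSpan ?_),
    L2norm_sum_raise_le hs c j, (L2norm_sum_lower_le hs c j).trans ?_, ?_, ?_⟩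
  · rw [sum_add_single]
    exact Nat.succ_le_succ (hs α hα)
  · exact (sum_sub_single_le α j).trans ((hs α hα).trans N.le_succ)
  · gcongr
    exacts [Real.sqrt_nonneg _, le_add_of_nonneg_right zero_le_one]
  · ext x
    simp only [Finset.sum_apply, Pi.add_apply, Pi.smul_apply, smul_eq_mul, Finset.mul_sum,
      ← Finset.sum_add_distrib]
    exact Finset.sum_congr rfl fun α _ => by
      linear_combination c α * coord_mul_hermiteFun α j x
  · ext x
    simp only [pderiv1_sum_smul_hermiteFun, Finset.sum_apply, Pi.add_apply, Pi.neg_apply,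
      Pi.smul_apply, smul_eq_mul, Finset.mul_sum, ← Finset.sum_add_distrib,
      ← Finset.sum_neg_distrib]
    exact Finset.sum_congr rfl fun α _ => by
      linear_combination c α * pderiv1_hermiteFun α j x

end Ladder

/-- `T` maps each `E_N` to `E_{N+m}`, with norm at most `(2 (N + m)) ^ (m / 2)` there. This is the
bound that a product of `m` operators, each an `x_j` or a `∂_j`, satisfies. No linearity of `T` is
built in, so that it applies directly to `pderiv1` and `pderivMulti`, which are functions rather
than linear maps. -/
def HasHermiteOrder {n : ℕ} (m : ℕ) (T : (En n → ℂ) → En n → ℂ) : Prop :=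
  ∀ (N : ℕ) (f : En n → ℂ), f ∈ hermiteSpan n N →
    T f ∈ hermiteSpan n (N + m) ∧ L2norm n (T f) ≤ √(2 * (N + m : ℕ)) ^ m * L2norm n f

namespace HasHermiteOrder

variable {n m k : ℕ} {S T : (En n → ℂ) → En n → ℂ}

lemma id : HasHermiteOrder 0 (id : (En n → ℂ) → En n → ℂ) :=
  fun N f hf => ⟨hf, by simp⟩

lemma comp (hS : HasHermiteOrder k S) (hT : HasHermiteOrder m T) :
    HasHermiteOrder (k + m) (S ∘ T) := by
  intro N f hf
  obtain ⟨hTf, hTf_le⟩ := hT N f hf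
  obtain ⟨hSTf, hSTf_le⟩ := hS (N + m) (T f) hTf
  have hN : N + m + k = N + (k + m) := by ring
  rw [hN] at hSTf hSTf_le
  refine ⟨hSTf, hSTf_le.trans ?_⟩
  rw [pow_add, mul_assoc]
  gcongr
  refine hTf_le.trans ?_
  gcongr
  exacts [Real.sqrt_nonneg _, Nat.le_add_left m k]

lemma iterate (hT : HasHermiteOrder m T) (k : ℕ) : HasHermiteOrder (k * m) T^[k] := by
  induction k with
  | zero => simpa using! HasHermiteOrder.id
  | succ k ih => simpa only [Function.iterate_succ, Nat.succ_mul] using ih.comp hT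

end HasHermiteOrder

section Operators

variable {n : ℕ}

lemma hasHermiteOrder_one_of_ladder {T : (En n → ℂ) → En n → ℂ}
    (hT : ∀ N, ∀ f ∈ hermiteSpan n N, ∃ u ∈ hermiteSpan n (N + 1), ∃ d ∈ hermiteSpan n (N + 1),
      L2norm n u ≤ √(N + 1) * L2norm n f ∧ L2norm n d ≤ √(N + 1) * L2norm n f ∧
      T f = ((√2)⁻¹ : ℂ) • (u + d)) :
    HasHermiteOrder 1 T := by
  intro N f hf
  obtain ⟨u, hu, d, hd, hu_le, hd_le, h⟩ := hT N f hf
  rw [h]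
  refine ⟨Submodule.smul_mem _ _ (Submodule.add_mem _ hu hd), ?_⟩
  rw [pow_one, Real.sqrt_mul zero_le_two, mul_assoc, Nat.cast_succ]
  exact L2norm_inv_sqrt_two_smul_add_le (memLp_of_mem_hermiteSpan hu)
    (memLp_of_mem_hermiteSpan hd) hu_le hd_le

lemma hasHermiteOrder_coord_mul (j : Fin n) :
    HasHermiteOrder 1 fun f (x : En n) => (x j : ℂ) * f x := by
  refine hasHermiteOrder_one_of_ladder fun N f hf => ?_
  obtain ⟨u, hu, d, hd, hu_le, hd_le, hmul, -⟩ := exists_ladder_decomposition j hf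
  exact ⟨u, hu, d, hd, hu_le, hd_le, hmul⟩

lemma hasHermiteOrder_pderiv1 (j : Fin n) : HasHermiteOrder 1 (pderiv1 j) := by
  refine hasHermiteOrder_one_of_ladder fun N f hf => ?_
  obtain ⟨u, hu, d, hd, hu_le, hd_le, -, hderiv⟩ := exists_ladder_decomposition j hf
  exact ⟨d, hd, -u, neg_mem hu, hd_le, (L2norm_neg u).trans_le hu_le, hderiv⟩

lemma hasHermiteOrder_pderivMulti (β : Fin n → ℕ) :
    HasHermiteOrder (∑ j, β j) (pderivMulti β) := by
  have hfoldr (l : List (Fin n)) : HasHermiteOrder (l.map β).sum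
      fun f => l.foldr (fun j g => (pderiv1 j)^[β j] g) f := by
    induction l with
    | nil => exact HasHermiteOrder.id
    | cons j l ih =>
      simpa only [List.map_cons, List.sum_cons, mul_one] using!
        ((hasHermiteOrder_pderiv1 j).iterate (β j)).comp ih
  rw [← List.sum_ofFn, List.ofFn_eq_map]
  exact hfoldr (List.finRange n)

lemma hasHermiteOrder_monomial_mul (α : Fin n → ℕ) :
    HasHermiteOrder (∑ j, α j) fun f (x : En n) => (monomial n α x : ℂ) * f x := by
  classical
  have hprod (s : Finset (Fin n)) : HasHermiteOrder (∑ j ∈ s, α j)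
      fun f (x : En n) => (∏ j ∈ s, (x j : ℂ) ^ α j) * f x := by
    induction s using Finset.induction_on with
    | empty => simpa using! HasHermiteOrder.id
    | insert j s hj ih =>
      have hpow : (fun (f : En n → ℂ) (x : En n) => (x j : ℂ) * f x)^[α j] =
          fun f x => (x j : ℂ) ^ α j * f x :=
        mul_left_iterate (fun x : En n => (x j : ℂ)) (α j)
      have h := ((hasHermiteOrder_coord_mul j).iterate (α j)).comp ih
      rw [hpow, mul_one] at h
      simpa only [Finset.sum_insert hj, Finset.prod_insert hj, mul_assoc] using! h
  simpa only [monomial, Complex.ofReal_prod, Complex.ofReal_pow] using hprod Finset.univ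

end Operators

theorem bernstein_estimate_monomial_general (n : ℕ) {ε δ : ℝ} (hε : 0 < ε) (hε2 : ε < 2)
    (hδ : 0 < δ) :
    ∃ Kt : ℝ, 1 < Kt ∧ ∀ (α β : Fin n → ℕ) (N : ℕ), ∀ f ∈ hermiteSpan n N,
      L2norm n (fun x => (monomial n α x : ℂ) * pderivMulti β f x) ≤
        Kt * (δ * (√2 * Real.exp 1)) ^ ((∑ j, α j) + (∑ j, β j)) *
          Real.Gamma ((((∑ j, α j) + (∑ j, β j) : ℕ) : ℝ) / (2 - ε) + 2) *
          Real.exp ((N : ℝ) ^ (1 - ε / 2) / δ ^ (2 - ε)) * L2norm n f := by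
  obtain ⟨C, hC, hC_le⟩ :=
    exists_sqrt_pow_le_exp_mul_Gamma (p := 2 - ε) (by linarith) (by linarith) hδ
  refine ⟨C, hC, fun α β N f hf => ?_⟩
  have horder := (hasHermiteOrder_monomial_mul α).comp (hasHermiteOrder_pderivMulti β)
  have hexponent : 1 - ε / 2 = (2 - ε) / 2 := by ring
  rw [hexponent]
  exact (horder N f hf).2.trans
    (mul_le_mul_of_nonneg_right (hC_le N _) (Real.sqrt_nonneg _))

/-- **Bernstein type estimates (Proposition "prop1", first estimate)**. -/
theorem bernstein_estimate_monomial (n : ℕ) (ε : ℝ) (hε : 0 < ε) (hε1 : ε ≤ 1) :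
    ∃ K : ℝ, 1 < K ∧ ∀ δ : ℝ, 0 < δ → δ ≤ 1 → ∃ Kt : ℝ, 1 < Kt ∧
      ∀ (α β : Fin n → ℕ) (N : ℕ), ∀ f ∈ hermiteSpan n N,
        L2norm n (fun x => (monomial n α x : ℂ) * pderivMulti β f x) ≤
          Kt * (δ * K) ^ ((∑ j, α j) + (∑ j, β j)) *
            Real.Gamma ((((∑ j, α j) + (∑ j, β j) : ℕ) : ℝ) / (2 - ε) + 2) *
            Real.exp ((N : ℝ) ^ (1 - ε / 2) / δ ^ (2 - ε)) * L2norm n f := by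
  have hK : 1 < √2 * Real.exp 1 :=
    one_lt_mul_of_lt_of_le Real.one_lt_sqrt_two (Real.one_le_exp zero_le_one)
  exact ⟨√2 * Real.exp 1, hK, fun δ hδ _ =>
    bernstein_estimate_monomial_general n hε (by linarith) hδ⟩

end
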